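/- Let p be a strictly positive probability mass function on a nonempty finite type α, let T > 0, and let b ∈ ℝ. Define the LHTS loss L_b(q) = -∑_x p(x) · exp(((1-T)/T)·log p(x) - b) · log q(x). Then for any two strictly positive pmfs q₁ and q₂ on α, L_b(q₁) ≤ L_b(q₂) if and only if KL(p_T ‖ q₁) ≤ KL(p_T ‖ q₂); i.e., minimizing the LHTS loss is equivalent to minimizing the KL divergence from the temperature-scaled distribution. -/

import Mathlib

/-!
For `p > 0` the loss weight is `p · exp (((1 - T) / T) · log p - b) = exp (-b) · p ^ (1 / T)`, which
is the constant `exp (-b) · Z > 0` times `p_T`. So the loss of `q` is a positive multiple of the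
cross entropy of `q` relative to `p_T`, which differs from `KL(p_T ‖ q)` by the entropy of `p_T`,
a constant in `q`.
-/

section

open Finset Real

variable {α : Type*}

/-- The cross entropy `-∑ x ∈ s, r x * log (q x)` of the weights `q` relative to the weights `r`,
neither of which has to be normalized. It links the loss to the relative entropy. -/
noncomputable def crossEntropy (s : Finset α) (r q : α → ℝ) : ℝ :=
  -∑ x ∈ s, r x * log (q x)

/-- The relative entropy (Kullback–Leibler divergence) `KL(r ‖ q)` of weights on a finite set, which
do not have to be normalized. It is real-valued, so it is meaningful only if `q` is positive
wherever `r` is. -/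
noncomputable def relativeEntropy (s : Finset α) (r q : α → ℝ) : ℝ :=
  ∑ x ∈ s, r x * log (r x / q x)

/-- The normalizing constant `Z` of the weights `p` on `s` at temperature `T`. -/
noncomputable def partitionFunction (s : Finset α) (p : α → ℝ) (T : ℝ) : ℝ :=
  ∑ x ∈ s, p x ^ (1 / T)

/-- The temperature-scaled distribution `p_T`, the target of the minimization. It is normalized over
`s`, which stands for the support of `p`. -/
noncomputable def temperatureScaled (s : Finset α) (p : α → ℝ) (T : ℝ) (x : α) : ℝ :=
  p x ^ (1 / T) / partitionFunction s p T

/-- The factor in front of `log (q x)` in the LHTS loss. -/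
noncomputable def lhtsWeight (p : α → ℝ) (T b : ℝ) (x : α) : ℝ :=
  p x * exp ((1 - T) / T * log (p x) - b)

/-- The LHTS loss `L_b(q)`, as a cross entropy relative to the unnormalized weights `lhtsWeight`. -/
noncomputable def lhtsLoss (s : Finset α) (p : α → ℝ) (T b : ℝ) (q : α → ℝ) : ℝ :=
  crossEntropy s (lhtsWeight p T b) q

variable {s : Finset α} {p : α → ℝ} {T : ℝ}

theorem crossEntropy_eq_mul {r r' : α → ℝ} {c : ℝ} (h : ∀ x ∈ s, r' x = c * r x) (q : α → ℝ) :
    crossEntropy s r' q = c * crossEntropy s r q := by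
  rw [crossEntropy, crossEntropy, mul_neg, mul_sum]
  exact congrArg Neg.neg (sum_congr rfl fun x hx => by rw [h x hx, mul_assoc])

theorem relativeEntropy_eq_crossEntropy_sub {r q : α → ℝ} (h : ∀ x ∈ s, r x ≠ 0 → q x ≠ 0) :
    relativeEntropy s r q = crossEntropy s r q - crossEntropy s r r := by
  rw [relativeEntropy, crossEntropy, crossEntropy, neg_sub_neg, ← sum_sub_distrib]
  refine sum_congr rfl fun x hx => ?_
  rcases eq_or_ne (r x) 0 with hr | hr
  · simp only [hr, zero_mul, sub_zero]
  · rw [log_div hr (h x hx hr), mul_sub]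

theorem relativeEntropy_le_relativeEntropy_iff {r q₁ q₂ : α → ℝ}
    (h₁ : ∀ x ∈ s, r x ≠ 0 → q₁ x ≠ 0) (h₂ : ∀ x ∈ s, r x ≠ 0 → q₂ x ≠ 0) :
    relativeEntropy s r q₁ ≤ relativeEntropy s r q₂ ↔
      crossEntropy s r q₁ ≤ crossEntropy s r q₂ := by
  rw [relativeEntropy_eq_crossEntropy_sub h₁, relativeEntropy_eq_crossEntropy_sub h₂,
    sub_le_sub_iff_right]

theorem partitionFunction_pos (hs : s.Nonempty) (hp : ∀ x ∈ s, 0 < p x) (T : ℝ) :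
    0 < partitionFunction s p T :=
  sum_pos (fun x hx => rpow_pos_of_pos (hp x hx) _) hs

theorem lhtsWeight_eq_exp_mul_rpow {x : α} (hp : 0 < p x) (hT : T ≠ 0) (b : ℝ) :
    lhtsWeight p T b x = exp (-b) * p x ^ (1 / T) := by
  have exponent_eq : log (p x) + ((1 - T) / T * log (p x) - b) = -b + log (p x) * (1 / T) := by
    field_simp
    ring
  calc lhtsWeight p T b x
      = exp (log (p x)) * exp ((1 - T) / T * log (p x) - b) := by rw [exp_log hp, lhtsWeight]
    _ = exp (-b) * p x ^ (1 / T) := by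
      rw [rpow_def_of_pos hp, ← exp_add, ← exp_add, exponent_eq]

theorem lhtsLoss_eq_mul_crossEntropy (hs : s.Nonempty) (hp : ∀ x ∈ s, 0 < p x) (hT : T ≠ 0)
    (b : ℝ) (q : α → ℝ) :
    lhtsLoss s p T b q =
      exp (-b) * partitionFunction s p T * crossEntropy s (temperatureScaled s p T) q := by
  refine crossEntropy_eq_mul (fun x hx => ?_) q
  rw [lhtsWeight_eq_exp_mul_rpow (hp x hx) hT, temperatureScaled, mul_assoc,
    mul_div_cancel₀ _ (partitionFunction_pos hs hp T).ne']

theorem lhts_loss_order_iff_kl_order_general (hs : s.Nonempty) (hp : ∀ x ∈ s, 0 < p x)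
    (hT : T ≠ 0) (b : ℝ) {q₁ q₂ : α → ℝ} (hq₁ : ∀ x ∈ s, 0 < q₁ x) (hq₂ : ∀ x ∈ s, 0 < q₂ x) :
    lhtsLoss s p T b q₁ ≤ lhtsLoss s p T b q₂ ↔
      relativeEntropy s (temperatureScaled s p T) q₁ ≤
        relativeEntropy s (temperatureScaled s p T) q₂ := by
  have hc : 0 < exp (-b) * partitionFunction s p T :=
    mul_pos (exp_pos _) (partitionFunction_pos hs hp T)
  rw [lhtsLoss_eq_mul_crossEntropy hs hp hT, lhtsLoss_eq_mul_crossEntropy hs hp hT,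
    mul_le_mul_iff_right₀ hc, relativeEntropy_le_relativeEntropy_iff
      (fun x hx _ => (hq₁ x hx).ne') (fun x hx _ => (hq₂ x hx).ne')]

end

/-- **Minimizing the LHTS loss is equivalent to minimizing KL from `p_T`.**
For a strictly positive pmf `p` on a nonempty finite type, `T > 0`, `b ∈ ℝ`, and any two
strictly positive pmfs `q₁`, `q₂`:
`L_b(q₁) ≤ L_b(q₂) ↔ KL(p_T ‖ q₁) ≤ KL(p_T ‖ q₂)`, where
`L_b(q) = -∑ x, p x · exp(((1-T)/T)·log p x - b) · log (q x)`,
`p_T x = p x ^ (1/T) / ∑ y, p y ^ (1/T)` and `KL(r ‖ q) = ∑ x, r x · log (r x / q x)`. -/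
theorem lhts_loss_order_iff_kl_order
    {α : Type*} [Fintype α] [Nonempty α]
    (p : α → ℝ) (hp : ∀ x, 0 < p x) (hp1 : ∑ x, p x = 1)
    (T : ℝ) (hT : 0 < T) (b : ℝ)
    (q₁ q₂ : α → ℝ) (hq₁ : ∀ x, 0 < q₁ x) (hq₁1 : ∑ x, q₁ x = 1)
    (hq₂ : ∀ x, 0 < q₂ x) (hq₂1 : ∑ x, q₂ x = 1) :
    (-(∑ x, p x * Real.exp ((1 - T) / T * Real.log (p x) - b) * Real.log (q₁ x))
        ≤ -(∑ x, p x * Real.exp ((1 - T) / T * Real.log (p x) - b) * Real.log (q₂ x)))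
      ↔ (∑ x, (p x ^ (1 / T) / ∑ y, p y ^ (1 / T)) *
            Real.log ((p x ^ (1 / T) / ∑ y, p y ^ (1 / T)) / q₁ x)
          ≤ ∑ x, (p x ^ (1 / T) / ∑ y, p y ^ (1 / T)) *
            Real.log ((p x ^ (1 / T) / ∑ y, p y ^ (1 / T)) / q₂ x)) :=
  lhts_loss_order_iff_kl_order_general Finset.univ_nonempty (fun x _ => hp x) hT.ne' b
    (fun x _ => hq₁ x) (fun x _ => hq₂ x)
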